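/- Let R be an integral domain, X an indeterminate over R, and * a star operation of finite character on R[X]. The following statements are equivalent: (i) every upper to zero in R[X] is a *-maximal ideal of R[X]; (ii) R is a UMT-domain and t-Max(R[X]) = *-Max(R[X]). -/

import Mathlib

open Polynomial

/-- A *star operation* on a domain `S` with quotient field `M`: a map on the nonzero
fractional ideals of `S` satisfying `(aI)^* = aI^*`, `I ⊆ I^*`, monotonicity,
idempotency and `S^* = S`. -/
structure IsStarOperation (S M : Type*) [CommRing S] [IsDomain S] [Field M] [Algebra S M]
    [IsFractionRing S M]
    (star : FractionalIdeal (nonZeroDivisors S) M → FractionalIdeal (nonZeroDivisors S) M) :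
    Prop where
  smul_eq : ∀ a : M, a ≠ 0 → ∀ I, I ≠ 0 →
    star (FractionalIdeal.spanSingleton (nonZeroDivisors S) a * I) =
      FractionalIdeal.spanSingleton (nonZeroDivisors S) a * star I
  le_star : ∀ I, I ≠ 0 → I ≤ star I
  mono : ∀ I J, I ≠ 0 → J ≠ 0 → I ≤ J → star I ≤ star J
  idem : ∀ I, I ≠ 0 → star (star I) = star I
  star_one : star 1 = 1

/-- A star operation has *finite character* if
`I^* = ⋃ {J^* : J nonzero finitely generated fractional ideal, J ⊆ I}`. -/
def StarFiniteCharacter (S M : Type*) [CommRing S] [IsDomain S] [Field M] [Algebra S M]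
    [IsFractionRing S M]
    (star : FractionalIdeal (nonZeroDivisors S) M → FractionalIdeal (nonZeroDivisors S) M) :
    Prop :=
  ∀ I, I ≠ 0 → ∀ x : M,
    x ∈ star I ↔ ∃ J : FractionalIdeal (nonZeroDivisors S) M, J ≠ 0 ∧ (J : Submodule S M).FG ∧ J ≤ I ∧ x ∈ star J

/-- `Q` is a `*`-maximal ideal: a proper nonzero integral `*`-ideal which is maximal
among proper integral `*`-ideals. -/
def IsStarMaximal {S M : Type*} [CommRing S] [IsDomain S] [Field M] [Algebra S M]
    [IsFractionRing S M]
    (star : FractionalIdeal (nonZeroDivisors S) M → FractionalIdeal (nonZeroDivisors S) M)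
    (Q : Ideal S) : Prop :=
  Q ≠ ⊥ ∧ Q ≠ ⊤ ∧ star ↑Q = (Q : FractionalIdeal (nonZeroDivisors S) M) ∧
    ∀ J : Ideal S, J ≠ ⊥ → J ≠ ⊤ → star ↑J = (J : FractionalIdeal (nonZeroDivisors S) M) →
      Q ≤ J → Q = J

/-- An *upper to zero* in `R[X]`: a nonzero prime ideal `Q` with `Q ∩ R = (0)`. -/
def IsUpperToZero {R : Type*} [CommRing R] [IsDomain R] (Q : Ideal R[X]) : Prop :=
  Q.IsPrime ∧ Q ≠ ⊥ ∧ Q.comap (C : R →+* R[X]) = ⊥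

/-- `c(Q)`: the content of an ideal `Q` of `R[X]`, the ideal of `R` generated by the
coefficients of all elements of `Q`. -/
def contentIdeal {R : Type*} [CommRing R] (Q : Ideal R[X]) : Ideal R :=
  Ideal.span {a : R | ∃ f ∈ Q, ∃ n, f.coeff n = a}

/-- `c(f)`: the content of a polynomial, the ideal generated by its coefficients. -/
def coeffIdeal {R : Type*} [CommRing R] (f : R[X]) : Ideal R :=
  Ideal.span {a : R | ∃ n, f.coeff n = a}

variable {R K L : Type*} [CommRing R] [IsDomain R]
  [Field K] [Algebra R K] [IsFractionRing R K]
  [Field L] [Algebra R[X] L] [IsFractionRing R[X] L]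

/-- `I^{\bar{*}} = (I[X])^* ∩ K` for an integral ideal `I` of `R`, as a subset of `K`;
here `ι : K →+* L = K(X)` is the canonical embedding. -/
def barStarSet
    (star : FractionalIdeal (nonZeroDivisors R[X]) L → FractionalIdeal (nonZeroDivisors R[X]) L)
    (ι : K →+* L) (I : Ideal R) : Set K :=
  {x : K | ι x ∈ star ((I.map (C : R →+* R[X]) : Ideal R[X]) :
      FractionalIdeal (nonZeroDivisors R[X]) L)}

/-- `I_t = ⋃ {J_v : J nonzero finitely generated fractional ideal, J ⊆ I}`, as a subset of
the quotient field, where `J_v = (S : (S : J)) = 1/(1/J)`. -/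
def tSet {S M : Type*} [CommRing S] [IsDomain S] [Field M] [Algebra S M] [IsFractionRing S M]
    (I : FractionalIdeal (nonZeroDivisors S) M) : Set M :=
  ⋃ J ∈ {J : FractionalIdeal (nonZeroDivisors S) M |
      J ≠ 0 ∧ (J : Submodule S M).FG ∧ J ≤ I},
    (((1 / (1 / J) : FractionalIdeal (nonZeroDivisors S) M) : Submodule S M) : Set M)

/-- `Q` is a `t`-maximal ideal of `S`: a proper nonzero integral `t`-ideal maximal among
proper integral `t`-ideals. -/
def IsTMaximal {S : Type*} (M : Type*) [CommRing S] [IsDomain S] [Field M] [Algebra S M]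
    [IsFractionRing S M] (Q : Ideal S) : Prop :=
  Q ≠ ⊥ ∧ Q ≠ ⊤ ∧
    tSet (Q : FractionalIdeal (nonZeroDivisors S) M) =
      (((Q : FractionalIdeal (nonZeroDivisors S) M) : Submodule S M) : Set M) ∧
    ∀ J : Ideal S, J ≠ ⊥ → J ≠ ⊤ →
      tSet (J : FractionalIdeal (nonZeroDivisors S) M) =
        (((J : FractionalIdeal (nonZeroDivisors S) M) : Submodule S M) : Set M) →
      Q ≤ J → Q = J

/-- Elementary form of `x ∈ I_v` for an integral ideal `I`. -/
def VMem {S : Type*} [CommRing S] (I : Ideal S) (x : S) : Prop :=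
  ∀ a b : S, b ≠ 0 → (∀ j ∈ I, b ∣ a * j) → b ∣ a * x

/-- Elementary form of being a `t`-ideal. -/
def TClosed {S : Type*} [CommRing S] (Q : Ideal S) : Prop :=
  ∀ J : Ideal S, J.FG → J ≠ ⊥ → J ≤ Q → ∀ x, VMem J x → x ∈ Q

/-- The restriction of a finite-character star operation to integral ideals. -/
structure ClOp {S : Type*} [CommRing S] (cl : Ideal S → Ideal S) : Prop where
  le_cl : ∀ I, I ≠ ⊥ → I ≤ cl I
  mono : ∀ I J, I ≠ ⊥ → I ≤ J → cl I ≤ cl J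
  idem : ∀ I, I ≠ ⊥ → cl (cl I) ≤ cl I
  vmem : ∀ I, I ≠ ⊥ → ∀ x ∈ cl I, VMem I x
  smul : ∀ y, y ≠ 0 → ∀ I, I ≠ ⊥ → ∀ z ∈ cl I, y * z ∈ cl (Ideal.span {y} * I)
  fin : ∀ I, I ≠ ⊥ → ∀ x ∈ cl I, ∃ J : Ideal S, J ≠ ⊥ ∧ J.FG ∧ J ≤ I ∧ x ∈ cl J

/-- Elementary form of `*`-maximality. -/
def ClMax {S : Type*} [CommRing S] (P : Ideal S → Prop) (Q : Ideal S) : Prop :=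
  Q ≠ ⊥ ∧ Q ≠ ⊤ ∧ P Q ∧ ∀ J : Ideal S, J ≠ ⊥ → J ≠ ⊤ → P J → Q ≤ J → Q = J

theorem VMem.mono {S : Type*} [CommRing S] {I J : Ideal S} (h : I ≤ J) {x : S}
    (hx : VMem I x) : VMem J x :=
  fun a b hb hj => hx a b hb fun j hjI => hj j (h hjI)

theorem vmem_of_mem {S : Type*} [CommRing S] {I : Ideal S} {x : S} (hx : x ∈ I) : VMem I x :=
  fun _ _ _ hj => hj x hx

theorem VMem.trans {S : Type*} [CommRing S] {I J : Ideal S} {x : S}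
    (h : ∀ j ∈ J, VMem I j) (hx : VMem J x) : VMem I x :=
  fun a b hb hj => hx a b hb fun j hjJ => h j hjJ a b hb hj

/-- t-ideals are *-ideals -/
theorem ClOp.of_tClosed {S : Type*} [CommRing S] {cl : Ideal S → Ideal S} (h : ClOp cl)
    {Q : Ideal S} (hQ : Q ≠ ⊥) (ht : TClosed Q) : cl Q ≤ Q := by
  intro x hx
  obtain ⟨J, hJ0, hJf, hJQ, hxJ⟩ := h.fin Q hQ x hx
  exact ht J hJf hJ0 hJQ x (h.vmem J hJ0 x hxJ)

theorem ne_bot_mono {S : Type*} [CommRing S] {I J : Ideal S} (h : I ≤ J) (hI : I ≠ ⊥) : J ≠ ⊥ :=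
  fun hJ => hI (le_bot_iff.1 (hJ ▸ h))

/-- if `x` is not in a `*`-maximal ideal `N` then `(N, x)^* = S`. -/
theorem ClMax.sup_eq_top {S : Type*} [CommRing S] {cl : Ideal S → Ideal S} (h : ClOp cl)
    {N : Ideal S} (hN : ClMax (fun Q => cl Q ≤ Q) N) {x : S} (hx : x ∉ N) :
    cl (N ⊔ Ideal.span {x}) = ⊤ := by
  by_contra hne
  have h0 : N ⊔ Ideal.span {x} ≠ ⊥ := ne_bot_mono le_sup_left hN.1
  have h1 := h.le_cl _ h0
  have := hN.2.2.2 _ (ne_bot_mono h1 h0) hne (h.idem _ h0) (le_sup_left.trans h1)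
  apply hx
  rw [this]
  exact h1 (le_sup_right (a := N) (Ideal.mem_span_singleton_self x))

theorem ClMax.isPrime {S : Type*} [CommRing S] [IsDomain S] {cl : Ideal S → Ideal S} (h : ClOp cl)
    {N : Ideal S} (hN : ClMax (fun Q => cl Q ≤ Q) N) : N.IsPrime := by
  refine ⟨hN.2.1, fun {x y} hxy => ?_⟩
  by_contra! hc
  have ht := ClMax.sup_eq_top h hN hc.1
  have hy : y ≠ 0 := fun h0 => hc.2 (h0 ▸ N.zero_mem)
  have h0 : N ⊔ Ideal.span {x} ≠ ⊥ := ne_bot_mono le_sup_left hN.1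
  have h1 := h.smul y hy _ h0 1 (by rw [ht]; trivial)
  rw [mul_one] at h1
  refine hc.2 (hN.2.2.1 (h.mono _ _ ?_ ?_ h1))
  · intro hb
    rw [Ideal.mul_eq_bot, Ideal.span_singleton_eq_bot] at hb
    exact hb.elim hy h0
  · rw [Ideal.span_singleton_mul_le_iff]
    intro z hz
    obtain ⟨n, hn, m, hm, rfl⟩ := Submodule.mem_sup.1 hz
    obtain ⟨c, rfl⟩ := Ideal.mem_span_singleton.1 hm
    have : y * (n + x * c) = y * n + c * (x * y) := by ring
    rw [this]
    exact N.add_mem (N.mul_mem_left _ hn) (N.mul_mem_left _ hxy)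

theorem fg_sup_aux {S : Type*} [CommRing S] (N : Ideal S) (x : S) (B : Ideal S) (hB : B.FG) :
    B ≤ N ⊔ Ideal.span {x} → ∃ A : Ideal S, A.FG ∧ A ≤ N ∧ B ≤ A ⊔ Ideal.span {x} := by
  refine Submodule.fg_induction
    (motive := fun B _ => B ≤ N ⊔ Ideal.span {x} →
      ∃ A : Ideal S, A.FG ∧ A ≤ N ∧ B ≤ A ⊔ Ideal.span {x}) ?_ ?_ B hB
  · intro b hb
    obtain ⟨n, hn, m, hm, hnm⟩ := Submodule.mem_sup.1 (hb (Submodule.mem_span_singleton_self b))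
    refine ⟨Ideal.span {n}, ⟨{n}, by simp⟩, (Ideal.span_singleton_le_iff_mem _).2 hn, ?_⟩
    refine (Ideal.span_singleton_le_iff_mem _).2 ?_
    rw [← hnm]
    exact Submodule.add_mem_sup (Ideal.mem_span_singleton_self n) hm
  · intro B₁ B₂ _ _ h₁ h₂ h
    obtain ⟨A₁, f₁, l₁, k₁⟩ := h₁ (le_sup_left.trans h)
    obtain ⟨A₂, f₂, l₂, k₂⟩ := h₂ (le_sup_right.trans h)
    refine ⟨A₁ ⊔ A₂, Submodule.FG.sup f₁ f₂, sup_le l₁ l₂, sup_le (k₁.trans ?_) (k₂.trans ?_)⟩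
    · exact sup_le_sup_right le_sup_left _
    · exact sup_le_sup_right le_sup_right _

/-- A `*`-maximal ideal which is not a `t`-ideal contains a f.g. `J` with `J_v = S`. -/
theorem ClMax.exists_vmem_one {S : Type*} [CommRing S] {cl : Ideal S → Ideal S} (h : ClOp cl)
    {N : Ideal S} (hN : ClMax (fun Q => cl Q ≤ Q) N) (ht : ¬ TClosed N) :
    ∃ J : Ideal S, J.FG ∧ J ≠ ⊥ ∧ J ≤ N ∧ VMem J 1 := by
  unfold TClosed at ht
  push Not at ht
  obtain ⟨J, hJf, hJ0, hJN, x, hx, hxN⟩ := ht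
  have htop := ClMax.sup_eq_top h hN hxN
  have h0 : N ⊔ Ideal.span {x} ≠ ⊥ := ne_bot_mono le_sup_left hN.1
  obtain ⟨B, hB0, hBf, hBl, h1⟩ := h.fin _ h0 1 (by rw [htop]; trivial)
  obtain ⟨A, hAf, hAN, hBA⟩ := fg_sup_aux N x B hBf hBl
  refine ⟨J ⊔ A, Submodule.FG.sup hJf hAf, ne_bot_mono le_sup_left hJ0, sup_le hJN hAN, ?_⟩
  refine VMem.trans ?_ (h.vmem B hB0 1 h1)
  intro b hb
  obtain ⟨n, hn, m, hm, rfl⟩ := Submodule.mem_sup.1 (hBA hb)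
  obtain ⟨c, rfl⟩ := Ideal.mem_span_singleton.1 hm
  intro p q hq hj
  have e1 := hj n (le_sup_right (a := J) hn)
  have e2 := (hx.mono (le_sup_left (b := A))) p q hq hj
  have : p * (n + x * c) = p * n + p * x * c := by ring
  rw [this]
  exact dvd_add e1 (e2.mul_right c)

/-- every proper `*`-ideal is contained in a `*`-maximal ideal -/
theorem ClOp.exists_max {S : Type*} [CommRing S] {cl : Ideal S → Ideal S} (h : ClOp cl)
    {M : Ideal S} (h0 : M ≠ ⊥) (h1 : M ≠ ⊤) (hM : cl M ≤ M) :
    ∃ N, M ≤ N ∧ ClMax (fun Q => cl Q ≤ Q) N := by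
  obtain ⟨N, hMN, hmax⟩ := zorn_le_nonempty₀ {Q : Ideal S | Q ≠ ⊥ ∧ Q ≠ ⊤ ∧ cl Q ≤ Q} (by
    intro c hc hch y hy
    have hdir := hch.directedOn
    refine ⟨sSup c, ⟨ne_bot_mono (le_sSup hy) (hc hy).1, ?_, ?_⟩, fun z hz => le_sSup hz⟩
    · intro ht
      have : (1 : S) ∈ sSup c := by rw [ht]; trivial
      obtain ⟨I, hI, h1I⟩ := (Submodule.mem_sSup_of_directed ⟨y, hy⟩ hdir).1 this
      exact (hc hI).2.1 ((Ideal.eq_top_iff_one I).2 h1I)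
    · intro x hx
      obtain ⟨J, hJ0, hJf, hJl, hxJ⟩ := h.fin _ (ne_bot_mono (le_sSup hy) (hc hy).1) x hx
      obtain ⟨I, hI, hJI⟩ := (CompleteLattice.isCompactElement_iff_le_of_directed_sSup_le (α := Ideal S) J).1
        ((Submodule.fg_iff_compact J).1 hJf) c ⟨y, hy⟩ hdir hJl
      exact le_sSup hI ((hc hI).2.2 (h.mono J I hJ0 hJI hxJ))) M ⟨h0, h1, hM⟩
  refine ⟨N, hMN, hmax.1.1, hmax.1.2.1, hmax.1.2.2, fun J j0 j1 jc hNJ => ?_⟩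
  exact le_antisymm hNJ (hmax.2 ⟨j0, j1, jc⟩ hNJ)

/-- pseudo-division: an upper to zero is generated by one element up to denominators. -/
theorem upper_gen {A : Type*} [CommRing A] [IsDomain A] {Q : Ideal A[X]} (hQ : IsUpperToZero Q) :
    ∃ f ∈ Q, f ≠ 0 ∧ ∀ g ∈ Q, ∃ s : A, s ≠ 0 ∧ f ∣ C s * g := by
  obtain ⟨hp, h0, hc⟩ := hQ
  have hC : ∀ a : A, C a ∈ Q → a = 0 := fun a ha => by
    have : a ∈ Q.comap (C : A →+* A[X]) := ha
    rw [hc] at this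
    exact this
  have hex : ∃ n, ∃ f ∈ Q, f ≠ 0 ∧ f.natDegree = n := by
    obtain ⟨f, hf, hf0⟩ := Submodule.exists_mem_ne_zero_of_ne_bot h0
    exact ⟨_, f, hf, hf0, rfl⟩
  classical
  obtain ⟨f, hf, hf0, hfn⟩ := Nat.find_spec hex
  have hmin : ∀ g ∈ Q, g ≠ 0 → f.natDegree ≤ g.natDegree := fun g hg hg0 => by
    rw [hfn]; exact Nat.find_min' hex ⟨g, hg, hg0, rfl⟩
  have hpos : 0 < f.natDegree := by
    by_contra hz
    have h1 := eq_C_of_natDegree_eq_zero (Nat.eq_zero_of_not_pos hz)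
    have h2 : f.coeff 0 = 0 := hC _ (h1 ▸ hf)
    exact hf0 (by rw [h1, h2, C_0])
  refine ⟨f, hf, hf0, ?_⟩
  suffices H : ∀ n, ∀ g ∈ Q, g.natDegree ≤ n → ∃ s : A, s ≠ 0 ∧ f ∣ C s * g from
    fun g hg => H _ g hg le_rfl
  intro n
  induction n with
  | zero =>
    intro g hg hn
    by_cases hg0 : g = 0
    · exact ⟨1, one_ne_zero, by simp [hg0]⟩
    · have := hmin g hg hg0; omega
  | succ n ih =>
    intro g hg hn
    by_cases hg0 : g = 0
    · exact ⟨1, one_ne_zero, by simp [hg0]⟩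
    have hle := hmin g hg hg0
    have hlt := natDegree_cancelLeads_lt_of_natDegree_le_natDegree hle (hpos.trans_le hle)
    have hmem : f.cancelLeads g ∈ Q :=
      Q.sub_mem (Q.mul_mem_left _ hg) (Q.mul_mem_left _ hf)
    obtain ⟨s, hs, hd⟩ := ih _ hmem (by omega)
    refine ⟨s * f.leadingCoeff, mul_ne_zero hs (leadingCoeff_ne_zero.2 hf0), ?_⟩
    have e : C (s * f.leadingCoeff) * g = C s * f.cancelLeads g
        + C s * (C g.leadingCoeff * X ^ (g.natDegree - f.natDegree)) * f := by
      simp only [cancelLeads, Nat.sub_eq_zero_of_le hle, pow_zero, mul_one, C_mul]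
      ring
    rw [e]
    exact dvd_add hd (Dvd.intro_left _ rfl)

/-- Uppers to zero are `t`-ideals. -/
theorem upper_tClosed {A : Type*} [CommRing A] [IsDomain A] {Q : Ideal A[X]}
    (hQ : IsUpperToZero Q) : TClosed Q := by
  obtain ⟨f, hf, hf0, hgen⟩ := upper_gen hQ
  intro J hJf hJ0 hJQ x hx
  have key : J ≤ Q → ∃ s : A, s ≠ 0 ∧ ∀ j ∈ J, f ∣ C s * j := by
    refine Submodule.fg_induction
      (motive := fun J _ => J ≤ Q → ∃ s : A, s ≠ 0 ∧ ∀ j ∈ J, f ∣ C s * j) ?_ ?_ J hJf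
    · intro g hg
      obtain ⟨s, hs, hd⟩ := hgen g (hg (Submodule.mem_span_singleton_self g))
      refine ⟨s, hs, fun j hj => ?_⟩
      obtain ⟨c, rfl⟩ := Ideal.mem_span_singleton.1 hj
      rw [← mul_assoc]
      exact hd.mul_right c
    · intro J₁ J₂ _ _ h₁ h₂ h
      obtain ⟨s, hs, hd⟩ := h₁ (le_sup_left.trans h)
      obtain ⟨t, ht, he⟩ := h₂ (le_sup_right.trans h)
      refine ⟨s * t, mul_ne_zero hs ht, fun j hj => ?_⟩
      obtain ⟨n, hn, m, hm, rfl⟩ := Submodule.mem_sup.1 hj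
      have : C (s * t) * (n + m) = C s * n * C t + C t * m * C s := by
        rw [C_mul]; ring
      rw [this]
      exact dvd_add ((hd n hn).mul_right _) ((he m hm).mul_right _)
  obtain ⟨s, hs, hd⟩ := key hJQ
  have h1 : C s * x ∈ Q := Q.mem_of_dvd (hx (C s) f hf0 hd) hf
  refine (hQ.1.mem_or_mem h1).resolve_left fun hsQ => hs ?_
  have : s ∈ Q.comap (C : A →+* A[X]) := hsQ
  rw [hQ.2.2] at this
  exact this

/-- a f.g. ideal contains a polynomial carrying all the content. -/
theorem exists_content {A : Type*} [CommRing A] (J : Ideal A[X]) (hJ : J.FG) :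
    ∃ f ∈ J, ∀ b s : A, C s ∣ C b * f → ∀ j ∈ J, C s ∣ C b * j := by
  refine Submodule.fg_induction
    (motive := fun J _ => ∃ f ∈ J, ∀ b s : A, C s ∣ C b * f → ∀ j ∈ J, C s ∣ C b * j) ?_ ?_ J hJ
  · intro g
    refine ⟨g, Submodule.mem_span_singleton_self g, fun b s hd j hj => ?_⟩
    obtain ⟨c, rfl⟩ := Ideal.mem_span_singleton.1 hj
    rw [← mul_assoc]
    exact hd.mul_right c
  · rintro J₁ J₂ - - ⟨f, hf, h₁⟩ ⟨g, hg, h₂⟩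
    refine ⟨f + X ^ (f.natDegree + 1) * g,
      Submodule.add_mem_sup hf (Ideal.mul_mem_left J₂ _ hg), fun b s hd j hj => ?_⟩
    rw [C_dvd_iff_dvd_coeff] at hd
    have hdf : C s ∣ C b * f := by
      rw [C_dvd_iff_dvd_coeff]
      intro i
      by_cases hi : i < f.natDegree + 1
      · have := hd i
        rwa [coeff_C_mul, coeff_add, coeff_X_pow_mul', if_neg (by omega), add_zero,
          ← coeff_C_mul] at this
      · rw [coeff_C_mul, coeff_eq_zero_of_natDegree_lt (by omega), mul_zero]
        exact dvd_zero _
    have hdg : C s ∣ C b * g := by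
      rw [C_dvd_iff_dvd_coeff]
      intro i
      have := hd (i + (f.natDegree + 1))
      rwa [coeff_C_mul, coeff_add, coeff_X_pow_mul,
        coeff_eq_zero_of_natDegree_lt (by omega), zero_add, ← coeff_C_mul] at this
    obtain ⟨n, hn, m, hm, rfl⟩ := Submodule.mem_sup.1 hj
    rw [mul_add]
    exact dvd_add (h₁ b s hdf n hn) (h₂ b s hdg m hm)

/-- McCoy: if `b c(f) ⊆ sA` forces `b ∈ sA` then `f` is a nonzerodivisor modulo `s`. -/
theorem mccoy_aux {A : Type*} [CommRing A] (f : A[X]) (s : A)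
    (hf : ∀ b : A, C s ∣ C b * f → s ∣ b) (h : A[X]) (hd : C s ∣ f * h) : C s ∣ h := by
  have hz : ∀ p : A[X], p.map (Ideal.Quotient.mk (Ideal.span {s})) = 0 ↔ C s ∣ p := fun p => by
    rw [C_dvd_iff_dvd_coeff, Polynomial.ext_iff]
    simp [Ideal.Quotient.eq_zero_iff_mem, Ideal.mem_span_singleton]
  have hm : f.map (Ideal.Quotient.mk (Ideal.span {s})) ∈
      nonZeroDivisors (A ⧸ Ideal.span {s})[X] := by
    rw [Polynomial.mem_nonZeroDivisors_iff]
    intro a ha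
    obtain ⟨b, rfl⟩ := Ideal.Quotient.mk_surjective a
    rw [smul_eq_C_mul, ← map_C, ← Polynomial.map_mul, hz] at ha
    rw [Ideal.Quotient.eq_zero_iff_mem, Ideal.mem_span_singleton]
    exact hf b ha
  rw [← hz] at hd ⊢
  rw [Polynomial.map_mul] at hd
  exact hm.1 _ hd

/-- A `*`-maximal ideal containing no upper to zero is a `t`-ideal. -/
theorem tClosed_of_no_upper {A : Type*} [CommRing A] [IsDomain A] {cl : Ideal A[X] → Ideal A[X]}
    (h : ClOp cl) {N : Ideal A[X]} (hN : ClMax (fun Q => cl Q ≤ Q) N)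
    (hno : ∀ Q, IsUpperToZero Q → ¬ Q ≤ N) : TClosed N := by
  by_contra ht
  obtain ⟨J, hJf, hJ0, hJN, hv⟩ := ClMax.exists_vmem_one h hN ht
  have hNp : N.IsPrime := ClMax.isPrime h hN
  obtain ⟨f, hfJ, hcont⟩ := exists_content J hJf
  have hC : ∀ s : A, s ≠ 0 → ∀ b : A, C s ∣ C b * f → s ∣ b := by
    intro s hs b hd
    have := hv (C b) (C s) (C_ne_zero.2 hs) (hcont b s hd)
    rw [mul_one, C_dvd_iff_dvd_coeff] at this
    simpa using this 0
  have hf0 : f ≠ 0 := by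
    rintro rfl
    apply hJ0
    rw [eq_bot_iff]
    intro j hj
    have := hcont 1 0 (by simp) j hj
    simpa using this
  -- find `g ∉ N` and `s ≠ 0` with `f ∣ s g`
  have hex : ∃ s : A, s ≠ 0 ∧ ∃ g, g ∉ N ∧ f ∣ C s * g := by
    by_contra! hcon
    let T : Submonoid A[X] := (nonZeroDivisors A).map (C : A →+* A[X]) ⊔ N.primeCompl
    have hdis : Disjoint ((Ideal.span {f} : Ideal A[X]) : Set A[X]) T := by
      rw [Set.disjoint_left]
      intro x hx hxT
      obtain ⟨y, hy, z, hz, rfl⟩ := Submonoid.mem_sup.1 hxT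
      obtain ⟨s, hs, rfl⟩ := hy
      exact hcon s (nonZeroDivisors.ne_zero hs) z hz (Ideal.mem_span_singleton.1 hx)
    obtain ⟨Q, hQp, hfQ, hQT⟩ := Ideal.exists_le_prime_disjoint _ T hdis
    rw [Set.disjoint_left] at hQT
    refine hno Q ⟨hQp, ?_, ?_⟩ ?_
    · rintro rfl
      exact hf0 (hfQ (Ideal.mem_span_singleton_self f))
    · rw [eq_bot_iff]
      intro a ha
      by_contra ha0
      exact hQT ha (Submonoid.mem_sup_left ⟨a, mem_nonZeroDivisors_of_ne_zero ha0, rfl⟩)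
    · intro q hq
      by_contra hqN
      exact hQT hq (Submonoid.mem_sup_right hqN)
  obtain ⟨s, hs, g, hg, k, hk⟩ := hex
  obtain ⟨k', rfl⟩ := mccoy_aux f s (hC s hs) k ⟨g, hk.symm⟩
  have : g = f * k' := by
    apply mul_left_cancel₀ (C_ne_zero.2 hs)
    rw [hk]; ring
  exact hg (this ▸ N.mul_mem_right _ (hJN hfJ))

theorem core {A : Type*} [CommRing A] [IsDomain A] {cl : Ideal A[X] → Ideal A[X]}
    (h : ClOp cl) :
    (∀ Q : Ideal A[X], IsUpperToZero Q → ClMax (fun Q => cl Q ≤ Q) Q) ↔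
      ((∀ Q : Ideal A[X], IsUpperToZero Q → ClMax TClosed Q) ∧
        {Q : Ideal A[X] | ClMax TClosed Q} = {Q : Ideal A[X] | ClMax (fun Q => cl Q ≤ Q) Q}) := by
  constructor
  · intro H
    have tmax : ∀ N, ClMax (fun Q => cl Q ≤ Q) N → TClosed N → ClMax TClosed N :=
      fun N hN ht => ⟨hN.1, hN.2.1, ht, fun J j0 j1 jt hNJ =>
        hN.2.2.2 J j0 j1 (h.of_tClosed j0 jt) hNJ⟩
    have key : ∀ N, ClMax (fun Q => cl Q ≤ Q) N → TClosed N := by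
      intro N hN
      by_cases hno : ∀ Q, IsUpperToZero Q → ¬ Q ≤ N
      · exact tClosed_of_no_upper h hN hno
      · push Not at hno
        obtain ⟨Q, hQ, hQN⟩ := hno
        have := (H Q hQ).2.2.2 N hN.1 hN.2.1 hN.2.2.1 hQN
        rw [← this]
        exact upper_tClosed hQ
    refine ⟨fun Q hQ => tmax Q (H Q hQ) (upper_tClosed hQ), ?_⟩
    ext M
    refine ⟨fun (hM : ClMax TClosed M) => ?_, fun hN => tmax M hN (key M hN)⟩
    obtain ⟨N, hMN, hN⟩ := h.exists_max hM.1 hM.2.1 (h.of_tClosed hM.1 hM.2.2.1)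
    have := hM.2.2.2 N hN.1 hN.2.1 (key N hN) hMN
    rw [this]
    exact hN
  · rintro ⟨H1, H2⟩ Q hQ
    have : Q ∈ {Q : Ideal A[X] | ClMax TClosed Q} := H1 Q hQ
    rw [H2] at this
    exact this

/-! ### Translation -/

theorem one_div_ne_zero_aux {S M : Type*} [CommRing S] [IsDomain S] [Field M] [Algebra S M]
    [IsFractionRing S M] (I : FractionalIdeal (nonZeroDivisors S) M) (hI : I ≠ 0) :
    (1 / I : FractionalIdeal (nonZeroDivisors S) M) ≠ 0 := by
  intro h
  obtain ⟨a, ha, hI2⟩ := I.isFractional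
  have : algebraMap S M a ∈ (1 / I : FractionalIdeal (nonZeroDivisors S) M) := by
    rw [FractionalIdeal.mem_div_iff_of_ne_zero hI]
    intro y hy
    obtain ⟨z, hz⟩ := hI2 y hy
    rw [FractionalIdeal.mem_one_iff]
    exact ⟨z, by rw [hz, Algebra.smul_def]⟩
  rw [h, FractionalIdeal.mem_zero_iff] at this
  exact nonZeroDivisors.ne_zero ha
    ((map_eq_zero_iff _ (IsFractionRing.injective S M)).1 this)

theorem mem_coe_iff {S M : Type*} [CommRing S] [IsDomain S] [Field M] [Algebra S M]
    [IsFractionRing S M] (I : Ideal S) (x : S) :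
    algebraMap S M x ∈ (I : FractionalIdeal (nonZeroDivisors S) M) ↔ x ∈ I := by
  rw [FractionalIdeal.mem_coeIdeal]
  constructor
  · rintro ⟨y, hy, h⟩
    exact IsFractionRing.injective S M h ▸ hy
  · exact fun hx => ⟨x, hx, rfl⟩

theorem v_iff {S M : Type*} [CommRing S] [IsDomain S] [Field M] [Algebra S M]
    [IsFractionRing S M] (J : Ideal S) (hJ : J ≠ ⊥) (x : M) :
    x ∈ (1 / (1 / (J : FractionalIdeal (nonZeroDivisors S) M)) :
      FractionalIdeal (nonZeroDivisors S) M) ↔ ∃ y : S, algebraMap S M y = x ∧ VMem J y := by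
  have hJ' : (J : FractionalIdeal (nonZeroDivisors S) M) ≠ 0 := FractionalIdeal.coeIdeal_ne_zero.2 hJ
  rw [FractionalIdeal.mem_div_iff_of_ne_zero (one_div_ne_zero_aux _ hJ')]
  constructor
  · intro h
    have h1 : (1 : M) ∈ (1 / (J : FractionalIdeal (nonZeroDivisors S) M) :
        FractionalIdeal (nonZeroDivisors S) M) := by
      rw [FractionalIdeal.mem_div_iff_of_ne_zero hJ']
      intro y hy
      rw [one_mul]
      exact FractionalIdeal.coeIdeal_le_one hy
    obtain ⟨y, hy⟩ := (FractionalIdeal.mem_one_iff _).1 (h 1 h1)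
    rw [mul_one] at hy
    refine ⟨y, hy, fun a b hb hj => ?_⟩
    have hb' : algebraMap S M b ≠ 0 := by
      rwa [Ne, map_eq_zero_iff _ (IsFractionRing.injective S M)]
    have h2 := h (algebraMap S M a / algebraMap S M b) (by
      rw [FractionalIdeal.mem_div_iff_of_ne_zero hJ']
      intro z hz
      obtain ⟨j, hjJ, rfl⟩ := (FractionalIdeal.mem_coeIdeal _).1 hz
      obtain ⟨c, hc⟩ := hj j hjJ
      rw [FractionalIdeal.mem_one_iff]
      refine ⟨c, ?_⟩
      rw [div_mul_eq_mul_div, ← map_mul, hc, map_mul, mul_div_cancel_left₀ _ hb'])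
    obtain ⟨c, hc⟩ := (FractionalIdeal.mem_one_iff _).1 h2
    refine ⟨c, IsFractionRing.injective S M ?_⟩
    rw [map_mul, map_mul, hc, hy]
    field_simp
  · rintro ⟨y, rfl, hv⟩ z hz
    rw [FractionalIdeal.mem_div_iff_of_ne_zero hJ'] at hz
    obtain ⟨a, b, hb, rfl⟩ := IsFractionRing.div_surjective (A := S) z
    have hb0 := nonZeroDivisors.ne_zero hb
    have hb' : algebraMap S M b ≠ 0 := by
      rwa [Ne, map_eq_zero_iff _ (IsFractionRing.injective S M)]
    obtain ⟨c, hc⟩ := hv a b hb0 (fun j hj => by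
      obtain ⟨c, hc⟩ := (FractionalIdeal.mem_one_iff _).1 (hz _ ((mem_coe_iff J j).2 hj))
      refine ⟨c, IsFractionRing.injective S M ?_⟩
      rw [map_mul, map_mul, hc]
      field_simp)
    rw [FractionalIdeal.mem_one_iff]
    refine ⟨c, ?_⟩
    rw [mul_div_assoc', eq_div_iff hb', ← map_mul, ← map_mul, mul_comm y, hc, mul_comm]

theorem exists_ideal {S M : Type*} [CommRing S] [IsDomain S] [Field M] [Algebra S M]
    [IsFractionRing S M] {J : FractionalIdeal (nonZeroDivisors S) M} {Q : Ideal S}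
    (hJ0 : J ≠ 0) (hJf : (J : Submodule S M).FG)
    (hJ : J ≤ (Q : FractionalIdeal (nonZeroDivisors S) M)) :
    ∃ I : Ideal S, (I : FractionalIdeal (nonZeroDivisors S) M) = J ∧ I ≠ ⊥ ∧ I.FG ∧ I ≤ Q := by
  obtain ⟨I, rfl⟩ := FractionalIdeal.le_one_iff_exists_coeIdeal.1
    (hJ.trans FractionalIdeal.coeIdeal_le_one)
  exact ⟨I, rfl, FractionalIdeal.coeIdeal_ne_zero.1 hJ0,
    (FractionalIdeal.coeIdeal_fg _ (IsFractionRing.injective S M) I).1 hJf,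
    (FractionalIdeal.coeIdeal_le_coeIdeal M).1 hJ⟩

theorem tSet_iff {S M : Type*} [CommRing S] [IsDomain S] [Field M] [Algebra S M]
    [IsFractionRing S M] (Q : Ideal S) (hQ : Q ≠ ⊥) :
    tSet (Q : FractionalIdeal (nonZeroDivisors S) M) =
      (((Q : FractionalIdeal (nonZeroDivisors S) M) : Submodule S M) : Set M) ↔ TClosed Q := by
  have hmem : ∀ x : M, x ∈ tSet (Q : FractionalIdeal (nonZeroDivisors S) M) ↔
      ∃ J : Ideal S, J ≠ ⊥ ∧ J.FG ∧ J ≤ Q ∧ ∃ y, algebraMap S M y = x ∧ VMem J y := by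
    intro x
    simp only [tSet, Set.mem_iUnion, Set.mem_ofPred_eq, exists_prop]
    constructor
    · rintro ⟨J, ⟨h0, hf, hl⟩, hx⟩
      obtain ⟨I, rfl, i0, iF, il⟩ := exists_ideal h0 hf hl
      exact ⟨I, i0, iF, il, (v_iff I i0 x).1 hx⟩
    · rintro ⟨I, i0, iF, il, hx⟩
      exact ⟨I, ⟨FractionalIdeal.coeIdeal_ne_zero.2 i0,
        (FractionalIdeal.coeIdeal_fg _ (IsFractionRing.injective S M) I).2 iF,
        (FractionalIdeal.coeIdeal_le_coeIdeal M).2 il⟩, (v_iff I i0 x).2 hx⟩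
  constructor
  · intro h J hJf hJ0 hJQ x hx
    have : algebraMap S M x ∈ tSet (Q : FractionalIdeal (nonZeroDivisors S) M) :=
      (hmem _).2 ⟨J, hJ0, hJf, hJQ, x, rfl, hx⟩
    rw [h] at this
    exact (mem_coe_iff (M := M) Q x).1 this
  · intro h
    ext x
    rw [hmem]
    constructor
    · rintro ⟨J, j0, jf, jl, y, rfl, hy⟩
      exact (mem_coe_iff (M := M) Q y).2 (h J jf j0 jl y hy)
    · intro hx
      obtain ⟨y, hy, rfl⟩ := (FractionalIdeal.mem_coeIdeal _).1 hx
      obtain ⟨z, hz, hz0⟩ := Submodule.exists_mem_ne_zero_of_ne_bot hQ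
      refine ⟨Ideal.span {z, y}, ?_, Submodule.fg_span (Set.toFinite _), ?_, y, rfl,
        vmem_of_mem (Ideal.subset_span (by simp))⟩
      · intro hb
        have : z ∈ (⊥ : Ideal S) := hb ▸ Ideal.subset_span (by simp)
        exact hz0 this
      · rw [Ideal.span_le]
        rintro w (rfl | rfl)
        · exact hz
        · exact hy

/-- the ideal `I^* ∩ S`. -/
def clOf {S M : Type*} [CommRing S] [IsDomain S] [Field M] [Algebra S M]
    [IsFractionRing S M]
    (star : FractionalIdeal (nonZeroDivisors S) M → FractionalIdeal (nonZeroDivisors S) M)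
    (I : Ideal S) : Ideal S :=
  ((star I : FractionalIdeal (nonZeroDivisors S) M) : Submodule S M).comap
    (Algebra.linearMap S M)

theorem mem_clOf {S M : Type*} [CommRing S] [IsDomain S] [Field M] [Algebra S M]
    [IsFractionRing S M]
    (star : FractionalIdeal (nonZeroDivisors S) M → FractionalIdeal (nonZeroDivisors S) M)
    (I : Ideal S) (x : S) : x ∈ clOf star I ↔ algebraMap S M x ∈ star I := Iff.rfl

theorem coe_clOf {S M : Type*} [CommRing S] [IsDomain S] [Field M] [Algebra S M]
    [IsFractionRing S M]
    {star : FractionalIdeal (nonZeroDivisors S) M → FractionalIdeal (nonZeroDivisors S) M}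
    (hs : IsStarOperation S M star) (I : Ideal S) (hI : I ≠ ⊥) :
    (clOf star I : FractionalIdeal (nonZeroDivisors S) M) = star I := by
  have hle : star (I : FractionalIdeal (nonZeroDivisors S) M) ≤ 1 := by
    rw [← hs.star_one]
    exact hs.mono _ _ (FractionalIdeal.coeIdeal_ne_zero.2 hI) one_ne_zero
      FractionalIdeal.coeIdeal_le_one
  obtain ⟨I', hI'⟩ := FractionalIdeal.le_one_iff_exists_coeIdeal.1 hle
  have : clOf star I = I' := by
    ext x
    rw [mem_clOf, ← hI', mem_coe_iff]
  rw [this, hI']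

theorem clOp_clOf {S M : Type*} [CommRing S] [IsDomain S] [Field M] [Algebra S M]
    [IsFractionRing S M]
    {star : FractionalIdeal (nonZeroDivisors S) M → FractionalIdeal (nonZeroDivisors S) M}
    (hs : IsStarOperation S M star) (hfc : StarFiniteCharacter S M star) :
    ClOp (clOf star) := by
  have nz : ∀ {I : Ideal S}, I ≠ ⊥ → (I : FractionalIdeal (nonZeroDivisors S) M) ≠ 0 :=
    fun h => FractionalIdeal.coeIdeal_ne_zero.2 h
  refine ⟨?_, ?_, ?_, ?_, ?_, ?_⟩
  · intro I hI x hx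
    exact hs.le_star _ (nz hI) ((mem_coe_iff I x).2 hx)
  · intro I J hI hIJ x hx
    exact hs.mono _ _ (nz hI) (nz (ne_bot_mono hIJ hI))
      ((FractionalIdeal.coeIdeal_le_coeIdeal M).2 hIJ) hx
  · intro I hI x hx
    rw [mem_clOf, coe_clOf hs I hI, hs.idem _ (nz hI)] at hx
    exact hx
  · intro I hI x hx a b hb hj
    by_cases ha : a = 0
    · simp [ha]
    have ha' : algebraMap S M a ≠ 0 := by
      rwa [Ne, map_eq_zero_iff _ (IsFractionRing.injective S M)]
    have hb' : algebraMap S M b ≠ 0 := by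
      rwa [Ne, map_eq_zero_iff _ (IsFractionRing.injective S M)]
    have hq : algebraMap S M a / algebraMap S M b ≠ 0 := div_ne_zero ha' hb'
    have hle : FractionalIdeal.spanSingleton (nonZeroDivisors S)
        (algebraMap S M a / algebraMap S M b) * (I : FractionalIdeal (nonZeroDivisors S) M) ≤ 1 := by
      intro z hz
      obtain ⟨w, hw, rfl⟩ := FractionalIdeal.mem_singleton_mul.1 hz
      obtain ⟨j, hjI, rfl⟩ := (FractionalIdeal.mem_coeIdeal _).1 hw
      obtain ⟨c, hc⟩ := hj j hjI
      refine (FractionalIdeal.mem_one_iff _).2 ⟨c, ?_⟩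
      rw [div_mul_eq_mul_div, ← map_mul, hc, map_mul, mul_div_cancel_left₀ _ hb']
    have h0 : FractionalIdeal.spanSingleton (nonZeroDivisors S)
        (algebraMap S M a / algebraMap S M b) * (I : FractionalIdeal (nonZeroDivisors S) M) ≠ 0 :=
by
      intro hz
      obtain ⟨w, hw, hw0⟩ := Submodule.exists_mem_ne_zero_of_ne_bot hI
      have hm := FractionalIdeal.mem_singleton_mul.2
        ⟨algebraMap S M w, (mem_coe_iff (M := M) I w).2 hw,
          (rfl : algebraMap S M a / algebraMap S M b * algebraMap S M w = _)⟩
      rw [hz, FractionalIdeal.mem_zero_iff] at hm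
      rcases mul_eq_zero.1 hm with hm | hm
      · exact hq hm
      · exact hw0 ((map_eq_zero_iff _ (IsFractionRing.injective S M)).1 hm)
    have h1 := hs.mono _ _ h0 one_ne_zero hle
    rw [hs.star_one, hs.smul_eq _ hq _ (nz hI)] at h1
    obtain ⟨c, hc⟩ := (FractionalIdeal.mem_one_iff _).1
      (h1 (FractionalIdeal.mem_singleton_mul.2 ⟨_, hx, rfl⟩))
    refine ⟨c, IsFractionRing.injective S M ?_⟩
    rw [map_mul, map_mul, hc]
    simp only [Algebra.linearMap_apply]
    field_simp
  · intro y hy I hI z hz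
    have hy' : algebraMap S M y ≠ 0 := by
      rwa [Ne, map_eq_zero_iff _ (IsFractionRing.injective S M)]
    rw [mem_clOf, FractionalIdeal.coeIdeal_mul, FractionalIdeal.coeIdeal_span_singleton,
      hs.smul_eq _ hy' _ (nz hI), map_mul]
    exact FractionalIdeal.mem_singleton_mul.2 ⟨_, hz, rfl⟩
  · intro I hI x hx
    obtain ⟨J, h0, hf, hl, hxJ⟩ := (hfc _ (nz hI) _).1 hx
    obtain ⟨J', rfl, j0, jf, jl⟩ := exists_ideal h0 hf hl
    exact ⟨J', j0, jf, jl, hxJ⟩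

theorem star_eq_iff {S M : Type*} [CommRing S] [IsDomain S] [Field M] [Algebra S M]
    [IsFractionRing S M]
    {star : FractionalIdeal (nonZeroDivisors S) M → FractionalIdeal (nonZeroDivisors S) M}
    (hs : IsStarOperation S M star) (I : Ideal S) (hI : I ≠ ⊥) :
    star ↑I = (I : FractionalIdeal (nonZeroDivisors S) M) ↔ clOf star I ≤ I := by
  rw [← coe_clOf hs I hI, FractionalIdeal.coeIdeal_inj]
  refine ⟨fun h => h.le, fun h => le_antisymm h ?_⟩
  intro x hx
  exact hs.le_star _ (FractionalIdeal.coeIdeal_ne_zero.2 hI) ((mem_coe_iff I x).2 hx)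

theorem isStarMaximal_iff {S M : Type*} [CommRing S] [IsDomain S] [Field M] [Algebra S M]
    [IsFractionRing S M]
    {star : FractionalIdeal (nonZeroDivisors S) M → FractionalIdeal (nonZeroDivisors S) M}
    (hs : IsStarOperation S M star) (Q : Ideal S) :
    IsStarMaximal star Q ↔ ClMax (fun Q => clOf star Q ≤ Q) Q := by
  constructor
  · rintro ⟨h0, h1, h2, h3⟩
    exact ⟨h0, h1, (star_eq_iff hs Q h0).1 h2, fun J j0 j1 j2 =>
      h3 J j0 j1 ((star_eq_iff hs J j0).2 j2)⟩
  · rintro ⟨h0, h1, h2, h3⟩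
    exact ⟨h0, h1, (star_eq_iff hs Q h0).2 h2, fun J j0 j1 j2 =>
      h3 J j0 j1 ((star_eq_iff hs J j0).1 j2)⟩

theorem isTMaximal_iff {S M : Type*} [CommRing S] [IsDomain S] [Field M] [Algebra S M]
    [IsFractionRing S M] (Q : Ideal S) :
    IsTMaximal M Q ↔ ClMax TClosed Q := by
  constructor
  · rintro ⟨h0, h1, h2, h3⟩
    exact ⟨h0, h1, (tSet_iff Q h0).1 h2, fun J j0 j1 j2 =>
      h3 J j0 j1 ((tSet_iff J j0).2 j2)⟩
  · rintro ⟨h0, h1, h2, h3⟩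
    exact ⟨h0, h1, (tSet_iff Q h0).2 h2, fun J j0 j1 j2 =>
      h3 J j0 j1 ((tSet_iff J j0).1 j2)⟩

/-- every upper to zero in `R[X]` is `*`-maximal iff `R` is a `UMT`-domain
(every upper to zero in `R[X]` is `t`-maximal) and `t`-Max(`R[X]`) = `*`-Max(`R[X]`). -/
theorem statement17
    (star : FractionalIdeal (nonZeroDivisors R[X]) L → FractionalIdeal (nonZeroDivisors R[X]) L)
    (hstar : IsStarOperation R[X] L star) (hfc : StarFiniteCharacter R[X] L star) :
    (∀ Q : Ideal R[X], IsUpperToZero Q → IsStarMaximal star Q) ↔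
      ((∀ Q : Ideal R[X], IsUpperToZero Q → IsTMaximal L Q) ∧
        {Q : Ideal R[X] | IsTMaximal L Q} = {Q : Ideal R[X] | IsStarMaximal star Q}) := by
  simp only [isStarMaximal_iff hstar, isTMaximal_iff]
  exact core (clOp_clOf hstar hfc)
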